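/- Let (k : K → X, f : X → M) be a monoid extension, m ∈ M and u ∈ B_m. Then the map θ from the set of invertible elements of K to B_m defined by θ(a) = k(a) + u is a bijection. -/

import Mathlib

/-- A monoid extension: `K`, `X` additive monoids (not assumed commutative),
`M` a multiplicative monoid, `k : K → X` an injective monoid homomorphism whose image
is `{x | f x = 1}`, and `f : X → M` a surjective monoid homomorphism. -/
structure MonoidExtension {K X M : Type*} [AddMonoid K] [AddMonoid X] [Monoid M]
    (k : K → X) (f : X → M) : Prop where
  k_add : ∀ a b : K, k (a + b) = k a + k b
  k_zero : k 0 = 0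
  k_inj : Function.Injective k
  ker_eq : ∀ x : X, f x = 1 ↔ x ∈ Set.range k
  f_add : ∀ x y : X, f (x + y) = f x * f y
  f_zero : f 0 = 1
  f_surj : Function.Surjective f

/-- The set `B_m` of representatives of `m`. -/
def Reps {K X M : Type*} [AddMonoid K] [AddMonoid X] [Monoid M]
    (k : K → X) (f : X → M) (m : M) : Set X :=
  {u | f u = m ∧ ∀ x : X, f x = m → ∃! a : K, x = k a + u}

/-- A monoid extension is a Schreier extension if every `m` has a representative. -/
def IsSchreier {K X M : Type*} [AddMonoid K] [AddMonoid X] [Monoid M]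
    (k : K → X) (f : X → M) : Prop :=
  ∀ m : M, (Reps k f m).Nonempty

/-!
Through `k`, the monoid `K` acts on `X`, and `B_m` is the set of those `u` for which `a ↦ a +ᵥ u`
identifies `K` with the fibre of `f` over `m`. Since `a ↦ a +ᵥ (c +ᵥ u)` is right addition of `c`
followed by this identification, `c +ᵥ u` has the same property exactly when right addition of `c`
is a bijection of `K`, that is, when `c` is invertible.
-/

section FreeGenerators

open Set Function

theorem bijOn_comp_iff_bijective {α β γ : Type*} {g : β → γ} {t : Set γ}
    (hg : BijOn g univ t) (h : α → β) : BijOn (g ∘ h) univ t ↔ Bijective h := by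
  refine ⟨fun hgh => ⟨fun a b hab => ?_, fun b => ?_⟩, fun hh => hg.comp hh.bijOn_univ⟩
  · exact hgh.injOn (mem_univ a) (mem_univ b) (congrArg g hab)
  · obtain ⟨a, -, hab⟩ := hgh.surjOn (hg.mapsTo (mem_univ b))
    exact ⟨a, hg.injOn (mem_univ _) (mem_univ _) hab⟩

/-- The free generators of a subset `S` of an additive `K`-act: the points `u` such that every
element of `S` is `a +ᵥ u` for a unique `a : K`. Asking for `Set.BijOn` on all of `K` also forces
`K +ᵥ u ⊆ S`, so `S` need not be assumed invariant. -/
def freeGenerators (K : Type*) {Y : Type*} [VAdd K Y] (S : Set Y) : Set Y :=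
  {u | BijOn (fun a : K => a +ᵥ u) univ S}

variable {K Y : Type*} [AddMonoid K] [AddAction K Y] {S : Set Y} {u : Y}

theorem freeGenerators_subset : freeGenerators K S ⊆ S := fun _ hu => by
  simpa only [zero_vadd] using hu.mapsTo (mem_univ (0 : K))

theorem vadd_mem_freeGenerators_iff (hu : u ∈ freeGenerators K S) {c : K} :
    c +ᵥ u ∈ freeGenerators K S ↔ IsAddUnit c := by
  have orbit_map : (fun a : K => a +ᵥ (c +ᵥ u)) = (fun a : K => a +ᵥ u) ∘ (· + c) :=
    funext fun a : K => (add_vadd a c u).symm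
  calc c +ᵥ u ∈ freeGenerators K S
      ↔ BijOn ((fun a : K => a +ᵥ u) ∘ (· + c)) univ S := by rw [← orbit_map]; rfl
    _ ↔ Bijective (fun a : K => a + c) := bijOn_comp_iff_bijective hu _
    _ ↔ IsAddUnit c := IsAddUnit.isAddUnit_iff_addRight_bijective.symm

theorem theta_bijection_general (hu : u ∈ freeGenerators K S) :
    BijOn (fun a : K => a +ᵥ u) {a : K | IsAddUnit a} (freeGenerators K S) := by
  have preimage_eq : (fun a : K => a +ᵥ u) ⁻¹' freeGenerators K S = {a | IsAddUnit a} :=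
    Set.ext fun _ : K => vadd_mem_freeGenerators_iff hu
  simpa only [univ_inter, preimage_eq] using hu.subset_right (freeGenerators_subset (K := K))

end FreeGenerators

namespace MonoidExtension

variable {K X M : Type*} [AddMonoid K] [AddMonoid X] [Monoid M] {k : K → X} {f : X → M}

/-- The action `a +ᵥ x = k a + x` of the kernel `K` of a monoid extension on `X`, whose free
generators in the fibres of `f` are the representatives. It depends on `k`, so it is not an
instance. -/
abbrev addAction (hE : MonoidExtension k f) : AddAction K X where
  vadd a x := k a + x
  zero_vadd x := show k 0 + x = x by rw [hE.k_zero, zero_add]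
  add_vadd a b x := show k (a + b) + x = k a + (k b + x) by rw [hE.k_add, add_assoc]

theorem map_add_eq (hE : MonoidExtension k f) (a : K) (x : X) : f (k a + x) = f x := by
  rw [hE.f_add, (hE.ker_eq (k a)).2 ⟨a, rfl⟩, one_mul]

theorem reps_eq_freeGenerators (hE : MonoidExtension k f) (m : M) :
    letI := hE.addAction
    Reps k f m = freeGenerators K (f ⁻¹' {m}) := by
  let := hE.addAction
  ext u
  constructor
  · rintro ⟨hum, hu⟩
    have mem_fibre (a : K) : f (k a + u) = m := (hE.map_add_eq a u).trans hum
    refine ⟨fun a _ => mem_fibre a, fun a _ b _ hab => ?_, fun x hx => ?_⟩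
    · exact (hu (k a + u) (mem_fibre a)).unique rfl hab
    · obtain ⟨a, hxa, -⟩ := hu x hx
      exact ⟨a, Set.mem_univ a, hxa.symm⟩
  · refine fun hu => ⟨freeGenerators_subset (S := f ⁻¹' {m}) hu, fun x hx => ?_⟩
    obtain ⟨a, -, hax⟩ := hu.surjOn hx
    exact ⟨a, hax.symm, fun b hb =>
      hu.injOn (Set.mem_univ b) (Set.mem_univ a) (hb.symm.trans hax.symm)⟩

end MonoidExtension

/-- Corollary 2.3 (cor:group_B): for a monoid extension, `m ∈ M` and `u ∈ B_m`, the map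
`θ : U(K) → B_m`, `a ↦ k a + u`, is a bijection from the set of invertible (additive unit)
elements of `K` onto `B_m`. -/
theorem theta_bijection {K X M : Type*} [AddMonoid K] [AddMonoid X] [Monoid M]
    (k : K → X) (f : X → M) (hE : MonoidExtension k f)
    (m : M) (u : X) (hu : u ∈ Reps k f m) :
    Set.BijOn (fun a : K => k a + u) {a : K | IsAddUnit a} (Reps k f m) := by
  let := hE.addAction
  rw [hE.reps_eq_freeGenerators] at hu ⊢
  exact theta_bijection_general hu
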